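/- Let T_{p,x} = inf{q ≥ p : S_q − S_p = −|x|} (with T_{p,x} = +∞ if no such q exists). For all integers p ≤ n and all x ∈ G_ℕ: if n ≤ T_{p,x} (i.e. S_{p,j} > −|x| for all p ≤ j < n) then Ψ_{p,n}(x) = x + e(x)·S_{p,n}, and if n > T_{p,x} (i.e. S_{p,j} = −|x| for some p ≤ j < n) then Ψ_{p,n}(x) = Ψ_{p,n}(0). -/

import Mathlib

noncomputable section

/-- The star graph `G` with `N` half-lines `D_1, …, D_N` glued at the origin, realized by
canonical representatives in `Fin N × ℝ`: a point is a pair (ray index, distance to the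
origin), the origin being represented on the ray of index `N - 1` (i.e. the ray `e_N`,
matching the convention `e(0) = e_N`). -/
def StarG (N : ℕ) : Type :=
  {p : Fin N × ℝ // 0 ≤ p.2 ∧ (p.2 = 0 → (p.1 : ℕ) = N - 1)}

namespace StarG

variable {N : ℕ}

instance : DecidableEq (StarG N) :=
  inferInstanceAs (DecidableEq {p : Fin N × ℝ // 0 ≤ p.2 ∧ (p.2 = 0 → (p.1 : ℕ) = N - 1)})

instance : MeasurableSpace (StarG N) :=
  inferInstanceAs (MeasurableSpace {p : Fin N × ℝ // 0 ≤ p.2 ∧ (p.2 = 0 → (p.1 : ℕ) = N - 1)})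

/-- The ray index `e(x)` of a point, with the convention `e(0) = e_N`. -/
def ray (x : StarG N) : Fin N := x.1.1

/-- `|x| = d(x, 0)`, the distance from `x` to the origin. -/
def nrm (x : StarG N) : ℝ := x.1.2

/-- The distance on `G`: `d(h·e_i, h'·e_j) = |h − h'|` if `i = j` and `h + h'` if
`i ≠ j`. -/
def dist (x y : StarG N) : ℝ :=
  if x.ray = y.ray then |x.nrm - y.nrm| else x.nrm + y.nrm

/-- The origin `0` of `G` (requires `N ≥ 1`). -/
def origin (hN : 1 ≤ N) : StarG N :=
  ⟨(⟨N - 1, by omega⟩, 0), le_refl 0, fun _ => rfl⟩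

/-- The point `h·e_i` (sent to the origin when `h ≤ 0`; in particular `0·e_i = 0` for
every `i`).  For `x` on the ray `D_i` and `t ≥ −|x|`, the point `x + e(x)·t` is
`pt hN (ray x) (nrm x + t)`. -/
def pt (hN : 1 ≤ N) (i : Fin N) (h : ℝ) : StarG N :=
  if hh : 0 < h then ⟨(i, h), le_of_lt hh, fun h0 => absurd h0 (ne_of_gt hh)⟩
  else origin hN

/-- `x ∈ D_i` : the point `x` lies on the `i`-th half-line (the origin lies on all). -/
def memRay (x : StarG N) (i : Fin N) : Prop := x.ray = i ∨ x.nrm = 0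

/-- `x ∈ G_ℕ` : the distance from `x` to the origin is a natural number. -/
def isLattice (x : StarG N) : Prop := ∃ m : ℕ, x.nrm = (m : ℝ)

end StarG

/-- `min_{p ≤ h ≤ n} S h` (junk value `0` when `n < p`). -/
def walkMin (S : ℤ → ℤ) (p n : ℤ) : ℤ :=
  if h : p ≤ n then (Finset.Icc p n).inf' (Finset.nonempty_Icc.mpr h) S else 0

/-- `S⁺_{p,n} = S_{p,n} − min_{p ≤ h ≤ n} S_{p,h} = S n − min_{p ≤ h ≤ n} S h`. -/
def walkPlus (S : ℤ → ℤ) (p n : ℤ) : ℤ := S n - walkMin S p n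

/-- The one-step map `Ψ_{p,p+1}` on `G_ℕ`:
`Ψ_{p,p+1}(x) = x + e(x)·S_{p,p+1}` for `x ≠ 0` and `Ψ_{p,p+1}(0) = S⁺_{p,p+1}·η_p`. -/
def psiStep {N : ℕ} (hN : 1 ≤ N) (S : ℤ → ℤ) (η : ℤ → Fin N) (p : ℤ) (x : StarG N) :
    StarG N :=
  if x.nrm = 0 then StarG.pt hN (η p) ((walkPlus S p (p + 1) : ℤ) : ℝ)
  else StarG.pt hN x.ray (x.nrm + ((S (p + 1) - S p : ℤ) : ℝ))

/-- `k`-fold composition: `psiAux hN S η p k = Ψ_{p+k-1,p+k} ∘ ⋯ ∘ Ψ_{p,p+1}`. -/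
def psiAux {N : ℕ} (hN : 1 ≤ N) (S : ℤ → ℤ) (η : ℤ → Fin N) (p : ℤ) :
    ℕ → StarG N → StarG N
  | 0 => id
  | k + 1 => fun x => psiStep hN S η (p + k) (psiAux hN S η p k x)

/-- The discrete flow of mappings `Ψ_{p,n} = Ψ_{n−1,n} ∘ ⋯ ∘ Ψ_{p,p+1}` (the identity
when `n ≤ p`). -/
def psiFlow {N : ℕ} (hN : 1 ≤ N) (S : ℤ → ℤ) (η : ℤ → Fin N) (p n : ℤ) (x : StarG N) :
    StarG N :=
  psiAux hN S η p (n - p).toNat x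

/-!
The distance to the origin evolves autonomously under `Ψ`: every step replaces `|x|` by
`max (|x| + S_{p,p+1}) 0`, since `StarG.pt` stops at the origin a displacement that would pass it.
This recursion is monotone in `|x|`. Hence `|Ψ_{p,n}(0)| ≤ |Ψ_{p,n}(x)|`, so when the trajectory
of `x` reaches the origin, that of `0` is there too, and the cocycle property makes the two agree
from then on. Up to that time the trajectory of `x` never leaves its half-line.
-/

namespace StarG

variable {N : ℕ}

theorem ext {x y : StarG N} (hray : x.ray = y.ray) (hnrm : x.nrm = y.nrm) : x = y :=
  Subtype.ext (Prod.ext hray hnrm)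

theorem nrm_nonneg (x : StarG N) : 0 ≤ x.nrm := x.2.1

theorem nrm_origin (hN : 1 ≤ N) : (origin hN).nrm = 0 := rfl

theorem nrm_eq_zero_iff (hN : 1 ≤ N) {x : StarG N} : x.nrm = 0 ↔ x = origin hN :=
  ⟨fun h => ext (Fin.ext (x.2.2 h)) h, fun h => h ▸ nrm_origin hN⟩

theorem pt_of_nonpos (hN : 1 ≤ N) (i : Fin N) {h : ℝ} (hh : h ≤ 0) : pt hN i h = origin hN :=
  dif_neg hh.not_gt

theorem nrm_pt (hN : 1 ≤ N) (i : Fin N) (h : ℝ) : (pt hN i h).nrm = max h 0 := by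
  rcases le_or_gt h 0 with hh | hh
  · rw [pt_of_nonpos hN i hh, nrm_origin, max_eq_right hh]
  · exact (congrArg nrm (dif_pos hh)).trans (max_eq_left hh.le).symm

theorem ray_pt (hN : 1 ≤ N) (i : Fin N) {h : ℝ} (hh : 0 < h) : (pt hN i h).ray = i :=
  congrArg ray (dif_pos hh)

theorem pt_ray_nrm (hN : 1 ≤ N) (x : StarG N) : pt hN x.ray x.nrm = x := by
  rcases x.nrm_nonneg.eq_or_lt with h | h
  · rw [(nrm_eq_zero_iff hN).mp h.symm, pt_of_nonpos hN _ (nrm_origin hN).le]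
  · exact ext (ray_pt hN _ h) (by rw [nrm_pt, max_eq_left h.le])

end StarG

theorem walkMin_succ (S : ℤ → ℤ) (p : ℤ) : walkMin S p (p + 1) = min (S p) (S (p + 1)) := by
  have hIcc : Finset.Icc p (p + 1) = {p, p + 1} := by
    ext j
    simp only [Finset.mem_Icc, Finset.mem_insert, Finset.mem_singleton]
    omega
  simp [walkMin, hIcc]

theorem walkPlus_succ (S : ℤ → ℤ) (p : ℤ) :
    walkPlus S p (p + 1) = max (S (p + 1) - S p) 0 := by
  rw [walkPlus, walkMin_succ]
  omega

section Flow

variable {N : ℕ} (hN : 1 ≤ N) (S : ℤ → ℤ) (η : ℤ → Fin N)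

theorem psiStep_of_nrm_pos (p : ℤ) {x : StarG N} (hx : 0 < x.nrm) :
    psiStep hN S η p x = StarG.pt hN x.ray (x.nrm + ((S (p + 1) - S p : ℤ) : ℝ)) :=
  if_neg hx.ne'

theorem nrm_psiStep (p : ℤ) (x : StarG N) :
    (psiStep hN S η p x).nrm = max (x.nrm + ((S (p + 1) - S p : ℤ) : ℝ)) 0 := by
  rcases x.nrm_nonneg.eq_or_lt with h | h
  · rw [psiStep, if_pos h.symm, StarG.nrm_pt, walkPlus_succ, ← h]
    simp
  · rw [psiStep_of_nrm_pos hN S η p h, StarG.nrm_pt]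

theorem psiFlow_self (p : ℤ) (x : StarG N) : psiFlow hN S η p p x = x := by
  simp [psiFlow, psiAux]

theorem psiFlow_succ {p n : ℤ} (hpn : p ≤ n) (x : StarG N) :
    psiFlow hN S η p (n + 1) x = psiStep hN S η n (psiFlow hN S η p n x) := by
  obtain ⟨k, rfl⟩ := Int.le.dest hpn
  have hk : (p + k + 1 - p).toNat = k + 1 := by omega
  rw [psiFlow, psiFlow, hk, add_sub_cancel_left, Int.toNat_natCast, psiAux]

theorem psiFlow_psiFlow {p m n : ℤ} (hpm : p ≤ m) (hmn : m ≤ n) (x : StarG N) :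
    psiFlow hN S η m n (psiFlow hN S η p m x) = psiFlow hN S η p n x := by
  induction n, hmn using Int.leInduction with
  | base => rw [psiFlow_self]
  | succ n hmn ih => rw [psiFlow_succ hN S η hmn, ih, psiFlow_succ hN S η (hpm.trans hmn)]

theorem nrm_psiFlow_le_nrm_psiFlow (p n : ℤ) {x y : StarG N} (hxy : x.nrm ≤ y.nrm) :
    (psiFlow hN S η p n x).nrm ≤ (psiFlow hN S η p n y).nrm := by
  unfold psiFlow
  induction (n - p).toNat with
  | zero => exact hxy
  | succ k ih =>
    simp only [psiAux, nrm_psiStep]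
    gcongr

theorem psiFlow_origin_of_psiFlow_eq_origin {p n : ℤ} {x : StarG N}
    (hx : psiFlow hN S η p n x = StarG.origin hN) :
    psiFlow hN S η p n (StarG.origin hN) = StarG.origin hN := by
  have hle := nrm_psiFlow_le_nrm_psiFlow hN S η p n ((StarG.nrm_origin hN).trans_le x.nrm_nonneg)
  rw [hx, StarG.nrm_origin] at hle
  exact (StarG.nrm_eq_zero_iff hN).mp (hle.antisymm (StarG.nrm_nonneg _))

theorem psiFlow_eq_pt {p n : ℤ} (hpn : p ≤ n) {x : StarG N}
    (hpos : ∀ j : ℤ, p ≤ j → j < n → 0 < x.nrm + ((S j - S p : ℤ) : ℝ)) :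
    psiFlow hN S η p n x = StarG.pt hN x.ray (x.nrm + ((S n - S p : ℤ) : ℝ)) := by
  induction n, hpn using Int.leInduction with
  | base => simp [psiFlow_self, StarG.pt_ray_nrm]
  | succ n hpn ih =>
    have hn := hpos n hpn (lt_add_one n)
    have hnrm := (StarG.nrm_pt hN x.ray _).trans (max_eq_left hn.le)
    rw [psiFlow_succ hN S η hpn, ih fun j hpj hjn => hpos j hpj (hjn.trans (lt_add_one n)),
      psiStep_of_nrm_pos hN S η n (hn.trans_eq hnrm.symm), hnrm, StarG.ray_pt hN _ hn]
    congr 1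
    push_cast
    ring

theorem exists_psiFlow_eq_origin {p j : ℤ} (hpj : p ≤ j) {x : StarG N}
    (hj : x.nrm + ((S j - S p : ℤ) : ℝ) ≤ 0) :
    ∃ i, p ≤ i ∧ i ≤ j ∧ psiFlow hN S η p i x = StarG.origin hN := by
  obtain ⟨i, ⟨hpi, hi⟩, hmin⟩ := Int.exists_least_of_bdd
    (P := fun i => p ≤ i ∧ x.nrm + ((S i - S p : ℤ) : ℝ) ≤ 0) ⟨p, fun _ h => h.1⟩ ⟨j, hpj, hj⟩
  have hpos : ∀ k : ℤ, p ≤ k → k < i → 0 < x.nrm + ((S k - S p : ℤ) : ℝ) :=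
    fun k hpk hki => not_le.mp fun hk => (hmin k ⟨hpk, hk⟩).not_gt hki
  refine ⟨i, hpi, hmin j ⟨hpj, hj⟩, ?_⟩
  rw [psiFlow_eq_pt hN S η hpi hpos, StarG.pt_of_nonpos hN _ hi]

theorem psiFlow_eq_psiFlow_origin {p j n : ℤ} (hpj : p ≤ j) (hjn : j ≤ n) {x : StarG N}
    (hj : x.nrm + ((S j - S p : ℤ) : ℝ) ≤ 0) :
    psiFlow hN S η p n x = psiFlow hN S η p n (StarG.origin hN) := by
  obtain ⟨i, hpi, hij, hi⟩ := exists_psiFlow_eq_origin hN S η hpj hj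
  rw [← psiFlow_psiFlow hN S η hpi (hij.trans hjn), hi,
    ← psiFlow_psiFlow hN S η hpi (hij.trans hjn),
    psiFlow_origin_of_psiFlow_eq_origin hN S η hi]

end Flow

theorem psiFlow_before_after_hitting_general {N : ℕ} (hN : 1 ≤ N) (S : ℤ → ℤ) (η : ℤ → Fin N)
    {p n : ℤ} (hpn : p ≤ n) (x : StarG N) :
    ((∀ j : ℤ, p ≤ j → j < n → -x.nrm < ((S j - S p : ℤ) : ℝ)) →
      psiFlow hN S η p n x = StarG.pt hN x.ray (x.nrm + ((S n - S p : ℤ) : ℝ))) ∧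
    ((∃ j : ℤ, p ≤ j ∧ j < n ∧ ((S j - S p : ℤ) : ℝ) = -x.nrm) →
      psiFlow hN S η p n x = psiFlow hN S η p n (StarG.origin hN)) := by
  refine ⟨fun hbefore => psiFlow_eq_pt hN S η hpn fun j hpj hjn => ?_, ?_⟩
  · exact neg_lt_iff_pos_add'.mp (hbefore j hpj hjn)
  · rintro ⟨j, hpj, hjn, hhit⟩
    exact psiFlow_eq_psiFlow_origin hN S η hpj hjn.le (by rw [hhit, add_neg_cancel])

/-- Let `T_{p,x} = inf {q ≥ p : S q − S p = −|x|}`.  For all integers `p ≤ n` and all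
`x ∈ G_ℕ`: if `n ≤ T_{p,x}` (i.e. `S_{p,j} > −|x|` for all `p ≤ j < n`) then
`Ψ_{p,n}(x) = x + e(x)·S_{p,n}`, and if `n > T_{p,x}` (i.e. `S_{p,j} = −|x|` for some
`p ≤ j < n`) then `Ψ_{p,n}(x) = Ψ_{p,n}(0)`. -/
theorem psiFlow_before_after_hitting (N : ℕ) (hN : 1 ≤ N) (S : ℤ → ℤ)
    (hS : ∀ n : ℤ, S n - S (n - 1) = 1 ∨ S n - S (n - 1) = -1)
    (η : ℤ → Fin N) (p n : ℤ) (hpn : p ≤ n) (x : StarG N) (hx : x.isLattice) :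
    ((∀ j : ℤ, p ≤ j → j < n → -x.nrm < ((S j - S p : ℤ) : ℝ)) →
      psiFlow hN S η p n x = StarG.pt hN x.ray (x.nrm + ((S n - S p : ℤ) : ℝ))) ∧
    ((∃ j : ℤ, p ≤ j ∧ j < n ∧ ((S j - S p : ℤ) : ℝ) = -x.nrm) →
      psiFlow hN S η p n x = psiFlow hN S η p n (StarG.origin hN)) :=
  psiFlow_before_after_hitting_general hN S η hpn x
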